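/- If G(g,k,ℓ) and G(g',k',ℓ') are two graphs in the family S_P with the same number of vertices, i.e. g + 2k + 2ℓ = g' + 2k' + 2ℓ', then I(G(g,k,ℓ),x) = I(G(g',k',ℓ'),x) as polynomials. -/

import Mathlib

/-!
Write `f_g(k, l)` for the independence polynomial of `SPgraph g k l`. Deleting the last pendant
vertex and the last path vertex of the second tail gives
`f_g(k, l+2) = (1 + x) f_g(k, l+1) + x (1 + x) f_g(k, l)` (`spPoly_rec_right`). The reflection of
the cycle exchanging its vertices `0` and `2` exchanges the two tails, so `f_g(k, l) = f_g(l, k)`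
(`spPoly_comm`), and the same recurrence holds in `k`. A function of `(k, l)` satisfying both
recurrences is determined by its values on `{0, 1}²` (`eq_of_rec`). Comparing these values yields
`f_3(k+1, l) = f_3(k, l+1)` and `f_5(k, l) = f_3(k, l+1)`, so `f_g(k, l)` depends only on
`g + 2k + 2l`.

The recurrence is proved for the polynomials `indepPolyOn H S` of subgraphs of one graph `H` on `ℕ`
induced by finite sets `S`, so that deleting vertices does not change the vertex type.
-/

open Polynomial SimpleGraph

/-- A finset of vertices is independent: pairwise nonadjacent. -/
def IsIndepFinset {V : Type*} (G : SimpleGraph V) (s : Finset V) : Prop :=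
  ∀ u ∈ s, ∀ v ∈ s, ¬ G.Adj u v

open Classical in
/-- The independence polynomial of a finite graph, with real coefficients. -/
noncomputable def indepPoly {V : Type*} [Fintype V] (G : SimpleGraph V) : Polynomial ℝ :=
  ∑ s : Finset V, if IsIndepFinset G s then (X : Polynomial ℝ) ^ s.card else 0

/-- `xi G` : the largest real root of the independence polynomial of `G`. -/
noncomputable def xi {V : Type*} [Fintype V] (G : SimpleGraph V) : ℝ :=
  sSup {x : ℝ | (indepPoly G).eval x = 0}

/-- `Pre H G` (`H ⪯ G`) : `I(H,x) ≥ I(G,x)` for all `x ∈ [ξ(G), 0]`. -/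
def Pre {V W : Type*} [Fintype V] [Fintype W] (H : SimpleGraph W) (G : SimpleGraph V) : Prop :=
  ∀ x ∈ Set.Icc (xi G) 0, (indepPoly G).eval x ≤ (indepPoly H).eval x

/-- `SPre H G` (`H ≺ G`). -/
def SPre {V W : Type*} [Fintype V] [Fintype W] (H : SimpleGraph W) (G : SimpleGraph V) : Prop :=
  Pre H G ∧ indepPoly H ≠ indepPoly G

open Classical in
/-- A graph is well-covered if all maximal independent sets have the same size. -/
def WellCovered {V : Type*} (G : SimpleGraph V) : Prop :=
  ∀ s t : Finset V,
    IsIndepFinset G s → (∀ v ∉ s, ¬ IsIndepFinset G (insert v s)) →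
    IsIndepFinset G t → (∀ v ∉ t, ¬ IsIndepFinset G (insert v t)) →
    s.card = t.card

/-- A connected unicyclic graph: connected with as many edges as vertices. -/
def Unicyclic {V : Type*} [Fintype V] (G : SimpleGraph V) : Prop :=
  G.Connected ∧ G.edgeSet.ncard = Fintype.card V

/-- The graph star (corona with `K₁`) of `G`: each vertex `inl v` gets a pendant
vertex `inr v`. -/
def corona {V : Type*} (G : SimpleGraph V) : SimpleGraph (V ⊕ V) :=
  SimpleGraph.fromRel (fun a b =>
    match a, b with
    | Sum.inl u, Sum.inl v => G.Adj u v
    | Sum.inl u, Sum.inr v => u = v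
    | _, _ => False)

/-- `Ugraph n` (`U_n`, `n ≥ 3`): a triangle `0,1,2` with `n - 3` pendant vertices attached
to vertex `0`. -/
def Ugraph (n : ℕ) : SimpleGraph (Fin n) :=
  SimpleGraph.fromRel (fun i j => i.val = 0 ∨ (i.val = 1 ∧ j.val = 2))

/-- `Dgraph n` (`D_n`, `n ≥ 4`): a path `0,1,...,n-1` plus the chord `{0,2}`, i.e. a
triangle with a path on `n - 3` vertices attached. -/
def Dgraph (n : ℕ) : SimpleGraph (Fin n) :=
  SimpleGraph.fromRel (fun i j => j.val = i.val + 1 ∨ (i.val = 0 ∧ j.val = 2))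

/-- `starGraph n` (`S_n = K_{1,n-1}`): vertex `0` adjacent to all other vertices. -/
def starGraph (n : ℕ) : SimpleGraph (Fin n) :=
  SimpleGraph.fromRel (fun i _ => i.val = 0)

/-- `Mgraph n` (`M_n`, odd `n ≥ 5`): a triangle `0,1,2` with `(n-3)/2` paths of length two
attached at vertex `0`; the middle vertices are the odd indices `3,5,...,n-2` and the leaf
attached to middle vertex `i` is `i + 1`. -/
def Mgraph (n : ℕ) : SimpleGraph (Fin n) :=
  SimpleGraph.fromRel (fun i j =>
    (i.val = 0 ∧ (j.val ≤ 2 ∨ j.val % 2 = 1)) ∨ (i.val = 1 ∧ j.val = 2) ∨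
    (i.val % 2 = 1 ∧ 3 ≤ i.val ∧ j.val = i.val + 1))

/-- `SPgraph g k ℓ` (`G(g,k,ℓ)`, for `g ∈ {3,5}` and `k + ℓ ≥ 1`): a cycle on the vertices
`0,...,g-1`, a copy of `P_k*` on the vertices `g,...,g+2k-1` (path vertices at even offsets,
each followed by its pendant vertex) joined to the cycle vertex `0` by an edge to the
path end `g`, and a copy of `P_ℓ*` on the vertices `g+2k,...,g+2k+2ℓ-1` joined to the cycle
vertex `2` by an edge to the path end `g+2k`. -/
def SPgraph (g k ℓ : ℕ) : SimpleGraph (Fin (g + 2*k + 2*ℓ)) :=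
  SimpleGraph.fromRel (fun i j =>
    (i.val < g ∧ j.val < g ∧ (j.val = i.val + 1 ∨ (i.val = 0 ∧ j.val = g - 1))) ∨
    (i.val = 0 ∧ 0 < k ∧ j.val = g) ∨
    (g ≤ i.val ∧ i.val < g + 2*k ∧ (i.val - g) % 2 = 0 ∧
      (j.val = i.val + 1 ∨ (j.val = i.val + 2 ∧ j.val < g + 2*k))) ∨
    (i.val = 2 ∧ 0 < ℓ ∧ j.val = g + 2*k) ∨
    (g + 2*k ≤ i.val ∧ (i.val - (g + 2*k)) % 2 = 0 ∧
      (j.val = i.val + 1 ∨ j.val = i.val + 2)))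

/-- `Gtree n` (`G_{2n}`, `n ≥ 5`): the tree on `2n` vertices with path `v_1 … v_n` at
indices `0,…,n-1`, `z_1` at index `n`, `y_1, y_2` at `n+1, n+2`, `x_1, x_2` at `n+3, n+4`
(with `v_3 z_1`, `v_3 y_1`, `y_1 y_2`, `v_5 x_1`, `x_1 x_2` edges), and pendant vertices
`w_j` at index `n + j - 1` attached to `v_j` for `6 ≤ j ≤ n`. -/
def Gtree (n : ℕ) : SimpleGraph (Fin (2*n)) :=
  SimpleGraph.fromRel (fun a b =>
    (a.val + 1 = b.val ∧ b.val < n) ∨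
    (a.val = 2 ∧ (b.val = n ∨ b.val = n + 1)) ∨
    (a.val = n + 1 ∧ b.val = n + 2) ∨
    (a.val = 4 ∧ b.val = n + 3) ∨
    (a.val = n + 3 ∧ b.val = n + 4) ∨
    (5 ≤ a.val ∧ a.val < n ∧ b.val = n + a.val))

/-! ### Independence polynomials of induced subgraphs -/

open Classical in
/-- The independence polynomial of the subgraph of `G` induced by the finite vertex set `S`. -/
noncomputable def indepPolyOn {V : Type*} (G : SimpleGraph V) (S : Finset V) : Polynomial ℝ :=
  ∑ s ∈ S.powerset, if IsIndepFinset G s then (X : Polynomial ℝ) ^ s.card else 0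

lemma indepPolyOn_empty {V : Type*} (G : SimpleGraph V) : indepPolyOn G ∅ = 1 := by
  simp [indepPolyOn, IsIndepFinset]

lemma isIndepFinset_insert {V : Type*} [DecidableEq V] (G : SimpleGraph V) (v : V)
    (s : Finset V) :
    IsIndepFinset G (insert v s) ↔ IsIndepFinset G s ∧ ∀ w ∈ s, ¬ G.Adj v w := by
  simp only [IsIndepFinset, Finset.forall_mem_insert, SimpleGraph.irrefl, not_false_eq_true,
    true_and]
  constructor
  · rintro ⟨h1, h2⟩
    exact ⟨fun u hu w hw => (h2 u hu).2 w hw, h1⟩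
  · rintro ⟨h1, h2⟩
    exact ⟨h2, fun u hu => ⟨fun h => h2 u hu h.symm, h1 u hu⟩⟩

/-- Vertex deletion: `I(G) = I(G - v) + x I(G - N[v])`, where `T` plays the role of the
complement of the closed neighbourhood. -/
lemma indepPolyOn_insert {V : Type*} [DecidableEq V] (G : SimpleGraph V) {v : V}
    {S T : Finset V} (hv : v ∉ S) (hT : ∀ w, w ∈ T ↔ w ∈ S ∧ ¬ G.Adj v w) :
    indepPolyOn G (insert v S) = indepPolyOn G S + X * indepPolyOn G T := by
  classical
  unfold indepPolyOn
  rw [Finset.sum_powerset_insert hv]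
  congr 1
  have hTS : T.powerset ⊆ S.powerset := Finset.powerset_mono.2 fun w hw => ((hT w).1 hw).1
  rw [Finset.mul_sum, ← Finset.sum_subset hTS]
  · refine Finset.sum_congr rfl fun s hs => ?_
    have hs' := Finset.mem_powerset.1 hs
    have hvs : v ∉ s := fun h => hv ((hT v).1 (hs' h)).1
    have hn : ∀ w ∈ s, ¬ G.Adj v w := fun w hw => ((hT w).1 (hs' hw)).2
    have : IsIndepFinset G (insert v s) ↔ IsIndepFinset G s := by
      rw [isIndepFinset_insert]; exact and_iff_left hn
    by_cases h : IsIndepFinset G s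
    · simp [this, h, Finset.card_insert_of_notMem hvs, pow_succ']
    · simp [this, h]
  · intro s hs hsT
    refine if_neg fun h => hsT (Finset.mem_powerset.2 fun w hw => (hT w).2 ?_)
    exact ⟨Finset.mem_powerset.1 hs hw, ((isIndepFinset_insert G v s).1 h).2 w hw⟩

/-- Computational form of vertex deletion for an explicitly listed vertex set. -/
lemma indepPolyOn_cons {V : Type*} [DecidableEq V] (G : SimpleGraph V) [DecidableRel G.Adj]
    (v : V) (L : List V) (hv : v ∉ L) :
    indepPolyOn G (v :: L).toFinset =
      indepPolyOn G L.toFinset + X * indepPolyOn G (L.filter fun w => ¬ G.Adj v w).toFinset := by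
  rw [List.toFinset_cons]
  exact indepPolyOn_insert G (by simpa using hv) (by simp)

/-- An induced embedding transports the independence polynomial. -/
lemma indepPoly_eq_indepPolyOn {V W : Type*} [Fintype V] (G : SimpleGraph V) (H : SimpleGraph W)
    (f : V ↪ W) (hf : ∀ a b, G.Adj a b ↔ H.Adj (f a) (f b)) :
    indepPoly G = indepPolyOn H (Finset.univ.map f) := by
  classical
  unfold indepPoly indepPolyOn
  refine Finset.sum_bij (fun s _ => s.map f) ?_ ?_ ?_ ?_
  · intro s _
    exact Finset.mem_powerset.2 (Finset.map_subset_map.2 (Finset.subset_univ s))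
  · intro s _ t _ h
    exact Finset.map_injective f h
  · intro t ht
    obtain ⟨s, -, hs⟩ := Finset.subset_map_iff.1 (Finset.mem_powerset.1 ht)
    exact ⟨s, Finset.mem_univ _, hs.symm⟩
  · intro s _
    have : IsIndepFinset G s ↔ IsIndepFinset H (s.map f) := by
      simp [IsIndepFinset, hf]
    simp [this]

/-! ### The two-tailed graphs inside a graph on `ℕ` -/

/-- One orientation of the edges of the graph `spGraphNat g k`. -/
def spRel (g k i j : ℕ) : Prop :=
  (i < g ∧ j < g ∧ (j = i + 1 ∨ (i = 0 ∧ j = g - 1))) ∨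
  (i = 0 ∧ 0 < k ∧ j = g) ∨
  (g ≤ i ∧ i < g + 2*k ∧ (i - g) % 2 = 0 ∧ (j = i + 1 ∨ (j = i + 2 ∧ j < g + 2*k))) ∨
  (i = 2 ∧ j = g + 2*k) ∨
  (g + 2*k ≤ i ∧ (i - (g + 2*k)) % 2 = 0 ∧ (j = i + 1 ∨ j = i + 2))

/-- The graph on `ℕ` whose restriction to `{0, …, g + 2k + 2l - 1}` is `SPgraph g k l`: the second
tail is continued indefinitely. -/
def spGraphNat (g k : ℕ) : SimpleGraph ℕ := SimpleGraph.fromRel (spRel g k)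

instance (g k : ℕ) : DecidableRel (spGraphNat g k).Adj := fun a b => by
  unfold spGraphNat spRel
  rw [SimpleGraph.fromRel_adj]
  infer_instance

lemma spGraphNat_adj (g k a b : ℕ) : (spGraphNat g k).Adj a b ↔ a ≠ b ∧
    (spRel g k a b ∨ spRel g k b a) := by
  unfold spGraphNat
  exact SimpleGraph.fromRel_adj _ _ _

lemma SPgraph_adj (g k l : ℕ) (a b : Fin (g + 2*k + 2*l)) :
    (SPgraph g k l).Adj a b ↔ (spGraphNat g k).Adj a b := by
  -- The condition `0 < l` in `SPgraph` is implied by the existence of the vertex `g + 2k`.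
  have aux : ∀ i j : Fin (g + 2*k + 2*l),
      (i.val = 2 ∧ 0 < l ∧ j.val = g + 2*k) ↔ (i.val = 2 ∧ j.val = g + 2*k) := by
    intro i j
    have := j.2
    omega
  rw [spGraphNat_adj]
  simp only [SPgraph, SimpleGraph.fromRel_adj, spRel, aux, ne_eq, Fin.ext_iff]

/-- The pendant vertex at the path vertex `g + 2k + 2l` of the second tail is adjacent to that vertex
only. -/
lemma spGraphNat_adj_pendant {g k l w : ℕ} (hg : 3 ≤ g) :
    (spGraphNat g k).Adj (g + 2*k + 2*l + 1) w ↔ w = g + 2*k + 2*l := by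
  rw [spGraphNat_adj]
  constructor
  · rintro ⟨-, (h | h | h | h | h) | (h | h | h | h | h)⟩ <;> omega
  · rintro rfl
    refine ⟨by omega, Or.inr (Or.inr (Or.inr (Or.inr (Or.inr ?_))))⟩
    omega

/-- The only neighbour of a path vertex of the second tail, other than the first one, among the
vertices of smaller index is the preceding path vertex. -/
lemma spGraphNat_adj_path {g k l w : ℕ} (hg : 3 ≤ g) (hw : w < g + 2*k + 2*l + 2) :
    (spGraphNat g k).Adj (g + 2*k + 2*l + 2) w ↔ w = g + 2*k + 2*l := by
  rw [spGraphNat_adj]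
  constructor
  · rintro ⟨-, (h | h | h | h | h) | (h | h | h | h | h)⟩ <;> omega
  · rintro rfl
    refine ⟨by omega, Or.inr (Or.inr (Or.inr (Or.inr (Or.inr ?_))))⟩
    omega

/-- The independence polynomial of `SPgraph g k l`, as a function of the parameters. -/
noncomputable def spPoly (g k l : ℕ) : Polynomial ℝ := indepPoly (SPgraph g k l)

lemma spPoly_eq_indepPolyOn (g k l : ℕ) :
    spPoly g k l = indepPolyOn (spGraphNat g k) (Finset.range (g + 2*k + 2*l)) := by
  rw [spPoly, indepPoly_eq_indepPolyOn _ (spGraphNat g k) Fin.valEmbedding]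
  · congr 1
    ext i
    simp only [Finset.mem_map, Finset.mem_univ, true_and, Fin.valEmbedding_apply, Finset.mem_range]
    exact ⟨fun ⟨a, ha⟩ => ha ▸ a.2, fun h => ⟨⟨i, h⟩, rfl⟩⟩
  · exact SPgraph_adj g k l

/-- The path recurrence: with `u` the last path vertex of the tail, `u*` its pendant vertex and `p`
the path vertex preceding `u`, delete `u*` and `u`; once `p` is deleted too, its pendant vertex is
isolated. -/
lemma spPoly_rec_right (g k l : ℕ) (hg : 3 ≤ g) :
    spPoly g k (l + 2) = (1 + X) * spPoly g k (l + 1) + X * (1 + X) * spPoly g k l := by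
  simp only [spPoly_eq_indepPolyOn]
  obtain ⟨N, hN⟩ : ∃ N, N = g + 2*k + 2*l := ⟨_, rfl⟩
  rw [show g + 2*k + 2*(l+2) = N + 4 by omega, show g + 2*k + 2*(l+1) = N + 2 by omega, ← hN]
  have h1 : indepPolyOn (spGraphNat g k) (Finset.range (N + 4)) =
      indepPolyOn (spGraphNat g k) (Finset.range (N + 3)) +
      X * indepPolyOn (spGraphNat g k) (Finset.range (N + 2)) := by
    rw [Finset.range_add_one (n := N + 3)]
    refine indepPolyOn_insert _ (by simp) fun w => ?_
    rw [show N + 3 = g + 2*k + 2*(l+1) + 1 by omega, spGraphNat_adj_pendant hg]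
    simp only [Finset.mem_range]
    omega
  have h2 : indepPolyOn (spGraphNat g k) (Finset.range (N + 3)) =
      indepPolyOn (spGraphNat g k) (Finset.range (N + 2)) +
      X * indepPolyOn (spGraphNat g k) (insert (N + 1) (Finset.range N)) := by
    rw [Finset.range_add_one (n := N + 2)]
    refine indepPolyOn_insert _ (by simp) fun w => ?_
    simp only [Finset.mem_range, Finset.mem_insert]
    by_cases hw : w < N + 2
    · rw [hN, spGraphNat_adj_path hg (by omega)]
      omega
    · exact iff_of_false (by omega) (by tauto)
  have h3 : indepPolyOn (spGraphNat g k) (insert (N + 1) (Finset.range N)) =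
      indepPolyOn (spGraphNat g k) (Finset.range N) +
      X * indepPolyOn (spGraphNat g k) (Finset.range N) := by
    refine indepPolyOn_insert _ (by simp) fun w => ?_
    rw [hN, spGraphNat_adj_pendant hg]
    simp only [Finset.mem_range]
    omega
  rw [h1, h2, h3]
  ring

/-- The isomorphism from `SPgraph g k l` to `SPgraph g l k`, for `g = 3` or `g = 5`: it reflects the
cycle in the axis through vertex `1` and exchanges the two tails. -/
def swapTails (g k l v : ℕ) : ℕ :=
  if v < g then (if v = 0 then 2 else if v = 2 then 0 else if v = 3 then 4
    else if v = 4 then 3 else v)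
  else if v < g + 2*k then v + 2*l else v - 2*k

lemma swapTails_of_first {g k l v : ℕ} (h1 : g ≤ v) (h2 : v < g + 2*k) :
    swapTails g k l v = v + 2*l := by
  rw [swapTails, if_neg (by omega), if_pos h2]

lemma swapTails_of_second {g k l v : ℕ} (h : g + 2*k ≤ v) : swapTails g k l v = v - 2*k := by
  rw [swapTails, if_neg (by omega), if_neg (by omega)]

lemma swapTails_of_cycle {g k l v : ℕ} (hg : g = 3 ∨ g = 5) (hv : v < g) :
    swapTails g k l v < g ∧ swapTails g l k (swapTails g k l v) = v := by
  rcases hg with rfl | rfl <;> interval_cases v <;> simp [swapTails]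

lemma swapTails_lt {g k l v : ℕ} (hg : g = 3 ∨ g = 5) (hv : v < g + 2*k + 2*l) :
    swapTails g k l v < g + 2*l + 2*k := by
  rcases lt_or_ge v g with h | h
  · have := (swapTails_of_cycle (k := k) (l := l) hg h).1
    omega
  rcases lt_or_ge v (g + 2*k) with h' | h'
  · rw [swapTails_of_first h h']; omega
  · rw [swapTails_of_second h']; omega

lemma swapTails_swapTails {g k l v : ℕ} (hg : g = 3 ∨ g = 5) (hv : v < g + 2*k + 2*l) :
    swapTails g l k (swapTails g k l v) = v := by
  rcases lt_or_ge v g with h | h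
  · exact (swapTails_of_cycle hg h).2
  rcases lt_or_ge v (g + 2*k) with h' | h'
  · rw [swapTails_of_first h h', swapTails_of_second (by omega)]; omega
  · rw [swapTails_of_second h', swapTails_of_first (by omega) (by omega)]; omega

lemma swapTails_adj {g k l a b : ℕ} (hg : g = 3 ∨ g = 5) (ha : a < g + 2*k + 2*l)
    (hb : b < g + 2*k + 2*l) (h : (spGraphNat g k).Adj a b) :
    (spGraphNat g l).Adj (swapTails g k l a) (swapTails g k l b) := by
  have hne : swapTails g k l a ≠ swapTails g k l b := fun e => h.ne <| by
    rw [← swapTails_swapTails hg ha, e, swapTails_swapTails hg hb]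
  rw [spGraphNat_adj] at h ⊢
  refine ⟨hne, ?_⟩
  clear hne
  wlog h' : spRel g k a b generalizing a b
  · exact (this hb ha ⟨h.1.symm, h.2.symm⟩ (h.2.resolve_left h')).symm
  clear h
  have s0 : swapTails g k l 0 = 2 := by
    rw [swapTails, if_pos (by omega), if_pos rfl]
  have s2 : swapTails g k l 2 = 0 := by
    rw [swapTails, if_pos (by omega), if_neg (by omega), if_pos rfl]
  rcases h' with h' | h' | h' | h' | h'
  · have h1 := h'.1
    have h2 := h'.2.1
    rcases hg with rfl | rfl <;> interval_cases a <;> interval_cases b <;>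
      simp_all [swapTails, spRel]
  -- The edge from `0` to the first tail becomes the edge from `2` to the second tail.
  · obtain ⟨rfl, hk, rfl⟩ := h'
    rw [s0, swapTails_of_first le_rfl (by omega)]
    exact Or.inl (Or.inr (Or.inr (Or.inr (Or.inl ⟨rfl, rfl⟩))))
  · rw [swapTails_of_first h'.1 h'.2.1, swapTails_of_first (by omega) (by omega)]
    refine Or.inl (Or.inr (Or.inr (Or.inr (Or.inr ?_))))
    omega
  -- The edge from `2` to the second tail becomes the edge from `0` to the first tail.
  · obtain ⟨rfl, rfl⟩ := h'
    rw [s2, swapTails_of_second le_rfl]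
    refine Or.inl (Or.inr (Or.inl ?_))
    omega
  · rw [swapTails_of_second h'.1, swapTails_of_second (by omega)]
    refine Or.inl (Or.inr (Or.inr (Or.inl ?_)))
    omega

lemma spPoly_comm {g : ℕ} (hg : g = 3 ∨ g = 5) (k l : ℕ) : spPoly g k l = spPoly g l k := by
  have hinj : Function.Injective fun v : Fin (g + 2*k + 2*l) => swapTails g k l v := by
    intro a b h
    have h' := congrArg (swapTails g l k) h
    simp only [swapTails_swapTails hg a.2, swapTails_swapTails hg b.2] at h'
    exact Fin.ext h'
  rw [spPoly_eq_indepPolyOn g l k, spPoly,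
    indepPoly_eq_indepPolyOn _ (spGraphNat g l) ⟨_, hinj⟩]
  · congr 1
    ext i
    simp only [Finset.mem_map, Finset.mem_univ, true_and, Function.Embedding.coeFn_mk,
      Finset.mem_range]
    exact ⟨fun ⟨a, ha⟩ => ha ▸ swapTails_lt hg a.2,
      fun h => ⟨⟨swapTails g l k i, swapTails_lt hg h⟩, swapTails_swapTails hg h⟩⟩
  · rintro ⟨a, ha⟩ ⟨b, hb⟩
    rw [SPgraph_adj]
    refine ⟨swapTails_adj hg ha hb, fun h => ?_⟩
    have := swapTails_adj hg (swapTails_lt hg ha) (swapTails_lt hg hb) h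
    rwa [swapTails_swapTails hg ha, swapTails_swapTails hg hb] at this

lemma spPoly_rec_left {g : ℕ} (hg : g = 3 ∨ g = 5) (k l : ℕ) :
    spPoly g (k + 2) l = (1 + X) * spPoly g (k + 1) l + X * (1 + X) * spPoly g k l := by
  simp only [spPoly_comm hg _ l]
  exact spPoly_rec_right g l k (by omega)

/-! ### Initial values and the comparison -/

lemma spPoly_base {g k l : ℕ} (L : List ℕ)
    (hL : L.toFinset = Finset.range (g + 2*k + 2*l)) :
    spPoly g k l = indepPolyOn (spGraphNat g k) L.toFinset := by
  rw [spPoly_eq_indepPolyOn, hL]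

lemma spPoly_three_zero_zero : spPoly 3 0 0 = 1 + 3 * X := by
  rw [spPoly_base [0, 1, 2] (by decide)]
  simp [-List.toFinset_cons, indepPolyOn_cons, spGraphNat_adj, spRel, indepPolyOn_empty]
  ring

lemma spPoly_three_zero_one : spPoly 3 0 1 = 1 + 5 * X + 5 * X ^ 2 := by
  rw [spPoly_base [0, 1, 2, 3, 4] (by decide)]
  simp [-List.toFinset_cons, indepPolyOn_cons, spGraphNat_adj, spRel, indepPolyOn_empty]
  ring

lemma spPoly_five_zero_zero : spPoly 5 0 0 = 1 + 5 * X + 5 * X ^ 2 := by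
  rw [spPoly_base [0, 1, 2, 3, 4] (by decide)]
  simp [-List.toFinset_cons, indepPolyOn_cons, spGraphNat_adj, spRel, indepPolyOn_empty]
  ring

lemma spPoly_three_one_one : spPoly 3 1 1 = 1 + 7 * X + 14 * X ^ 2 + 8 * X ^ 3 := by
  rw [spPoly_base [0, 1, 2, 3, 4, 5, 6] (by decide)]
  simp [-List.toFinset_cons, indepPolyOn_cons, spGraphNat_adj, spRel, indepPolyOn_empty]
  ring

lemma spPoly_five_zero_one : spPoly 5 0 1 = 1 + 7 * X + 14 * X ^ 2 + 8 * X ^ 3 := by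
  rw [spPoly_base [0, 1, 2, 3, 4, 5, 6] (by decide)]
  simp [-List.toFinset_cons, indepPolyOn_cons, spGraphNat_adj, spRel, indepPolyOn_empty]
  ring

lemma spPoly_five_one_one :
    spPoly 5 1 1 = 1 + 9 * X + 27 * X ^ 2 + 32 * X ^ 3 + 13 * X ^ 4 := by
  rw [spPoly_base [0, 1, 2, 3, 4, 5, 6, 7, 8] (by decide)]
  simp [-List.toFinset_cons, indepPolyOn_cons, spGraphNat_adj, spRel, indepPolyOn_empty]
  ring

/-- A linear recurrence of order two in each variable is determined by its values on `{0, 1}²`. -/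
lemma eq_of_rec {R : Type*} [Semiring R] (p q : R) (F H : ℕ → ℕ → R)
    (hF : ∀ k l, F k (l + 2) = p * F k (l + 1) + q * F k l)
    (hF' : ∀ k l, F (k + 2) l = p * F (k + 1) l + q * F k l)
    (hH : ∀ k l, H k (l + 2) = p * H k (l + 1) + q * H k l)
    (hH' : ∀ k l, H (k + 2) l = p * H (k + 1) l + q * H k l)
    (h00 : F 0 0 = H 0 0) (h01 : F 0 1 = H 0 1) (h10 : F 1 0 = H 1 0) (h11 : F 1 1 = H 1 1)
    (k l : ℕ) : F k l = H k l := by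
  have row : ∀ k, F k 0 = H k 0 → F k 1 = H k 1 → ∀ l, F k l = H k l := by
    intro k h0 h1 l
    induction l using Nat.twoStepInduction with
    | zero => exact h0
    | one => exact h1
    | more n ih ih' => rw [hF, hH, ih, ih']
  induction k using Nat.twoStepInduction with
  | zero => exact row 0 h00 h01 l
  | one => exact row 1 h10 h11 l
  | more n ih ih' => rw [hF', hH', ih, ih']

lemma spPoly_three_zero_two : spPoly 3 0 2 = spPoly 3 1 1 := by
  rw [spPoly_rec_right 3 0 0 le_rfl, spPoly_three_zero_zero, spPoly_three_zero_one,
    spPoly_three_one_one]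
  ring

/-- One unit of length can be moved from one tail to the other on a triangle. -/
lemma spPoly_three_shift (k l : ℕ) : spPoly 3 (k + 1) l = spPoly 3 k (l + 1) := by
  have h3 : 3 = 3 ∨ 3 = 5 := Or.inl rfl
  refine eq_of_rec (1 + X) (X * (1 + X)) (fun k l => spPoly 3 (k + 1) l)
    (fun k l => spPoly 3 k (l + 1)) (fun k l => spPoly_rec_right 3 _ _ le_rfl)
    (fun k l => spPoly_rec_left h3 _ _) (fun k l => spPoly_rec_right 3 _ _ le_rfl)
    (fun k l => spPoly_rec_left h3 _ _) ?_ ?_ ?_ ?_ k l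
  · exact spPoly_comm h3 1 0
  · exact spPoly_three_zero_two.symm
  · exact (spPoly_comm h3 2 0).trans spPoly_three_zero_two
  · exact spPoly_comm h3 2 1

/-- A pentagon can be traded for a triangle with a tail longer by one unit. -/
lemma spPoly_five (k l : ℕ) : spPoly 5 k l = spPoly 3 k (l + 1) := by
  have h3 : 3 = 3 ∨ 3 = 5 := Or.inl rfl
  have h5 : 5 = 3 ∨ 5 = 5 := Or.inr rfl
  have h01 : spPoly 5 0 1 = spPoly 3 1 1 := spPoly_five_zero_one.trans spPoly_three_one_one.symm
  refine eq_of_rec (1 + X) (X * (1 + X)) (spPoly 5)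
    (fun k l => spPoly 3 k (l + 1)) (fun k l => spPoly_rec_right 5 _ _ (by norm_num))
    (fun k l => spPoly_rec_left h5 _ _) (fun k l => spPoly_rec_right 3 _ _ le_rfl)
    (fun k l => spPoly_rec_left h3 _ _) ?_ ?_ ?_ ?_ k l
  · exact spPoly_five_zero_zero.trans spPoly_three_zero_one.symm
  · exact h01.trans spPoly_three_zero_two.symm
  · exact (spPoly_comm h5 1 0).trans h01
  · change spPoly 5 1 1 = spPoly 3 1 2
    rw [spPoly_rec_right 3 1 0 le_rfl, spPoly_comm h3 1 0, spPoly_three_zero_one,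
      spPoly_three_one_one, spPoly_five_one_one]
    ring

lemma spPoly_three_eq (k l : ℕ) : spPoly 3 k l = spPoly 3 0 (k + l) := by
  induction k generalizing l with
  | zero => rw [Nat.zero_add]
  | succ n ih => rw [spPoly_three_shift, ih, show n + (l + 1) = n + 1 + l by omega]

/-- Any two graphs in the family `S_P` with the same number of vertices have
equal independence polynomials. -/
theorem stmt11 (g k l g' k' l' : ℕ) (hg : g = 3 ∨ g = 5) (hg' : g' = 3 ∨ g' = 5)
    (hk : 1 ≤ k + l) (hk' : 1 ≤ k' + l')
    (hcard : g + 2*k + 2*l = g' + 2*k' + 2*l') :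
    indepPoly (SPgraph g k l) = indepPoly (SPgraph g' k' l') := by
  change spPoly g k l = spPoly g' k' l'
  have key : ∀ g k l m, g = 3 ∨ g = 5 → g + 2*k + 2*l = 3 + 2*m →
      spPoly g k l = spPoly 3 0 m := by
    rintro g k l m (rfl | rfl) h
    · rw [spPoly_three_eq, show k + l = m by omega]
    · rw [spPoly_five, spPoly_three_eq, show k + (l + 1) = m by omega]
  obtain ⟨m, hm⟩ : ∃ m, g + 2*k + 2*l = 3 + 2*m := ⟨(g + 2*k + 2*l - 3) / 2, by omega⟩
  rw [key g k l m hg hm, key g' k' l' m hg' (hcard ▸ hm)]
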